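/- Let n ≥ 1 and let K ⊆ ℝⁿ be a convex set with γ_n(K) ≥ 9/10, where γ_n is the standard Gaussian probability measure on ℝⁿ. Then for every t ≥ 1, γ_n(tK) ≥ Φ(t), where tK = {tx : x ∈ K} and Φ(t) = ∫_{-∞}^t (2π)^{-1/2}·e^{-x²/2} dx is the standard Gaussian cumulative distribution function. -/

import Mathlib

/-!
The proof rests on two facts. Write `Φ` for the Gaussian distribution function and `γ` for the
standard Gaussian measure.

*Inradius.* Since `Φ(1) < 9/10`, there is `r > 1` with `Φ(r) < 9/10`. A point of norm at most `r`
outside the interior of `K` would, by separation, place the interior of `K` in a half-space of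
measure at most `Φ(r)`. As the frontier of a convex set is null, this contradicts `γ(K) ≥ 9/10`.
So the interior of `K` contains the closed ball of radius `r` (`ball_subset_interior`), and by
convexity `tK` contains every point at distance at most `(t - 1) r` from the closure of `K`.

*Isoperimetry.* If `A` is closed and convex with `γ(A) > Φ(r)`, then the points at distance at most
`s'` from `A` have measure at least `Φ(r + s)` whenever `0 ≤ s < s'` (`enlargement`). With
`s = t - 1` and `s' = (t - 1) r` this gives `γ(tK) ≥ Φ(r + t - 1) ≥ Φ(t)`; the case `t = 1` is
immediate.

The isoperimetric inequality is obtained by Bobkov's method. With `I = φ ∘ Φ⁻¹` the Gaussian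
isoperimetric profile, the two-point inequality (`two_point`)
`I((a + b)/2) ≤ (√(I(a)² + ((a - b)/2)²) + √(I(b)² + ((a - b)/2)²)) / 2`
tensorizes to the discrete cube (`bobkov_cube`). Applying it to random walks and passing to the
limit by the central limit theorem gives, for functions `f = Φ ∘ h` with `|∇h| ≤ L`,
`I(∫ f dγ) ≤ √(1 + L²) ∫ φ(h) dγ` (`bobkov_gaussian`). For a smoothed distance `D` to `A`
(`exists_smooth_dist`) and `h = l (c - D)`, this is a differential inequality in `c` saying that
`Φ⁻¹(∫ Φ(l (c - D)) dγ)` grows at rate at least `l / (1 + l)` (`quant_growth`). Letting `l → ∞`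
yields the claim.
-/

open MeasureTheory Real Pointwise RealInnerProductSpace
open scoped ENNReal

noncomputable section

/-- A convex body: a compact convex set with non-empty interior. -/
def IsConvexBody {n : ℕ} (K : Set (EuclideanSpace ℝ (Fin n))) : Prop :=
  IsCompact K ∧ Convex ℝ K ∧ (interior K).Nonempty

/-- The uniform probability measure on a set `K`. -/
def unifOn {n : ℕ} (K : Set (EuclideanSpace ℝ (Fin n))) : Measure (EuclideanSpace ℝ (Fin n)) :=
  (volume K)⁻¹ • volume.restrict K

/-- A probability measure `μ` on `ℝⁿ` is isotropic: its barycenter vanishes and its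
covariance matrix is the identity. -/
def IsIsotropicMeasure {n : ℕ} (μ : Measure (EuclideanSpace ℝ (Fin n))) : Prop :=
  (∀ i, ∫ x, x i ∂μ = 0) ∧ ∀ i j, ∫ x, x i * x j ∂μ = if i = j then 1 else 0

/-- A convex body is in isotropic position if the uniform probability measure on it
is isotropic. -/
def IsIsotropicBody {n : ℕ} (K : Set (EuclideanSpace ℝ (Fin n))) : Prop :=
  IsIsotropicMeasure (unifOn K)

/-- A log-concave density: nonnegative, and multiplicatively convex. This is equivalent to:
`{p > 0}` is convex and `log (1/p)` is convex on it. -/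
def IsLogConcaveDensity {n : ℕ} (p : EuclideanSpace ℝ (Fin n) → ℝ) : Prop :=
  (∀ x, 0 ≤ p x) ∧ ∀ x y : EuclideanSpace ℝ (Fin n), ∀ t : ℝ, 0 ≤ t → t ≤ 1 →
    p x ^ t * p y ^ (1 - t) ≤ p (t • x + (1 - t) • y)

/-- A measure on `ℝⁿ` is log-concave if it has a log-concave density w.r.t. Lebesgue. -/
def IsLogConcaveMeasure {n : ℕ} (μ : Measure (EuclideanSpace ℝ (Fin n))) : Prop :=
  ∃ p : EuclideanSpace ℝ (Fin n) → ℝ, Measurable p ∧ IsLogConcaveDensity p ∧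
    μ = volume.withDensity fun x => ENNReal.ofReal (p x)

/-- The standard Gaussian probability measure on `ℝⁿ`. -/
def stdGaussian (n : ℕ) : Measure (EuclideanSpace ℝ (Fin n)) :=
  volume.withDensity fun x => ENNReal.ofReal ((2 * π) ^ (-(n : ℝ) / 2) * Real.exp (-‖x‖ ^ 2 / 2))

/-- The Poincaré constant of a measure: the least `A ≥ 0` such that
`Var f ≤ A ⬝ E |∇ f|²` for all locally Lipschitz `f`. -/
def poincareConst {n : ℕ} (μ : Measure (EuclideanSpace ℝ (Fin n))) : ℝ :=
  sInf {A : ℝ | 0 ≤ A ∧ ∀ f : EuclideanSpace ℝ (Fin n) → ℝ, LocallyLipschitz f →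
    ∫ x, (f x - ∫ y, f y ∂μ) ^ 2 ∂μ ≤ A * ∫ x, ‖gradient f x‖ ^ 2 ∂μ}

/-- The KLS constant `ψₙ`. -/
def KLSConst (n : ℕ) : ℝ :=
  sSup {s : ℝ | ∃ μ : Measure (EuclideanSpace ℝ (Fin n)), IsProbabilityMeasure μ ∧
    IsLogConcaveMeasure μ ∧ IsIsotropicMeasure μ ∧ s = Real.sqrt (poincareConst μ)}

/-- The Hilbert-Schmidt norm of a matrix. -/
def hsNorm {n : ℕ} (M : Matrix (Fin n) (Fin n) ℝ) : ℝ :=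
  Real.sqrt (∑ i, ∑ j, (M i j) ^ 2)

/-- The coefficient `κₙ`, the supremum of `‖E [X₁ (X ⊗ X)]‖_HS` over all isotropic
log-concave random vectors `X` in `ℝⁿ`. -/
def kappaConst (n : ℕ) : ℝ :=
  sSup {s : ℝ | ∃ μ : Measure (EuclideanSpace ℝ (Fin n)), IsProbabilityMeasure μ ∧
    IsLogConcaveMeasure μ ∧ IsIsotropicMeasure μ ∧ ∃ h : 0 < n,
    s = hsNorm (Matrix.of fun i j => ∫ x, x ⟨0, h⟩ * (x i * x j) ∂μ)}

/-- A gauge function on `ℝⁿ`: non-negative, convex, positively homogeneous. -/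
def IsGauge {n : ℕ} (f : EuclideanSpace ℝ (Fin n) → ℝ) : Prop :=
  (∀ x, 0 ≤ f x) ∧ ConvexOn ℝ Set.univ f ∧
    ∀ (c : ℝ), 0 ≤ c → ∀ x, f (c • x) = c * f x

/-- `M(K)`: the mean of the Minkowski functional of `K` over the unit sphere, w.r.t. the
uniform probability measure on the sphere. -/
def Mparam (n : ℕ) (K : Set (EuclideanSpace ℝ (Fin n))) : ℝ :=
  ∫ x : Metric.sphere (0 : EuclideanSpace ℝ (Fin n)) 1,
    gauge K x ∂(((volume : Measure (EuclideanSpace ℝ (Fin n))).toSphere Set.univ)⁻¹ •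
      (volume : Measure (EuclideanSpace ℝ (Fin n))).toSphere)

/-- The polar body. -/
def polarBody {n : ℕ} (K : Set (EuclideanSpace ℝ (Fin n))) : Set (EuclideanSpace ℝ (Fin n)) :=
  {x | ∀ y ∈ K, ⟪x, y⟫ ≤ 1}

/-- `R(K)`: the maximal Euclidean norm of a point of `K`. -/
def Rparam {n : ℕ} (K : Set (EuclideanSpace ℝ (Fin n))) : ℝ :=
  sSup {r : ℝ | ∃ x ∈ K, r = ‖x‖}

/-- The operator norm `‖A : K → T‖ = sup_{x ≠ 0} ‖Ax‖_T / ‖x‖_K` (Minkowski functionals). -/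
def mapNorm {n : ℕ} (K T : Set (EuclideanSpace ℝ (Fin n)))
    (A : Matrix (Fin n) (Fin n) ℝ) : ℝ :=
  sSup {r : ℝ | ∃ x : EuclideanSpace ℝ (Fin n), x ≠ 0 ∧
    r = gauge T (Matrix.toEuclideanLin A x) / gauge K x}

/-- The ℓ₂ operator norm of a matrix. -/
def matOpNorm {n : ℕ} (M : Matrix (Fin n) (Fin n) ℝ) : ℝ :=
  ‖LinearMap.toContinuousLinearMap (Matrix.toEuclideanLin M)‖

/-- The standard Gaussian cumulative distribution function. -/
def gaussianCDF (t : ℝ) : ℝ :=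
  ∫ x in Set.Iic t, Real.exp (-x ^ 2 / 2) / Real.sqrt (2 * π)

/-! ### The one-dimensional Gaussian distribution -/

/-- The standard Gaussian density on `ℝ`. -/
def gaussDens (x : ℝ) : ℝ := Real.exp (-x ^ 2 / 2) / Real.sqrt (2 * π)

lemma gaussDens_pos (x : ℝ) : 0 < gaussDens x := by
  unfold gaussDens; positivity

lemma gaussDens_neg (x : ℝ) : gaussDens (-x) = gaussDens x := by
  simp [gaussDens]

lemma gaussDens_eq_pdf (x : ℝ) : gaussDens x = ProbabilityTheory.gaussianPDFReal 0 1 x := by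
  simp [gaussDens, ProbabilityTheory.gaussianPDFReal, div_eq_inv_mul]

lemma integrable_gaussDens : Integrable gaussDens := by
  have h := ProbabilityTheory.integrable_gaussianPDFReal 0 1
  exact h.congr (Filter.Eventually.of_forall fun x => (gaussDens_eq_pdf x).symm)

lemma hasDerivAt_gaussDens (x : ℝ) : HasDerivAt gaussDens (-x * gaussDens x) x := by
  have h1 : HasDerivAt (fun y : ℝ => -y ^ 2 / 2) (-x) x := by
    have := ((hasDerivAt_pow 2 x).neg).div_const 2
    convert! this using 1
    push_cast; ring
  have h2 := (h1.exp).div_const (Real.sqrt (2 * π))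
  unfold gaussDens
  convert! h2 using 1
  ring

lemma continuous_gaussDens : Continuous gaussDens :=
  continuous_iff_continuousAt.2 fun x => (hasDerivAt_gaussDens x).continuousAt

lemma gaussDens_le_of_abs_le {x y : ℝ} (h : |y| ≤ |x|) : gaussDens x ≤ gaussDens y := by
  unfold gaussDens
  have := sq_le_sq.2 h
  gcongr

lemma gaussDens_le (x : ℝ) : gaussDens x ≤ 2 / 5 := by
  refine (gaussDens_le_of_abs_le (y := 0) (by simp)).trans ?_
  unfold gaussDens
  rw [div_le_iff₀ (by positivity)]
  have : (5 / 2 : ℝ) ≤ Real.sqrt (2 * π) := by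
    apply Real.le_sqrt_of_sq_le
    nlinarith [Real.pi_gt_d2]
  have e : Real.exp (-(0 : ℝ) ^ 2 / 2) = 1 := by simp
  rw [e]
  linarith

lemma gaussianCDF_eq (t : ℝ) :
    gaussianCDF t = ProbabilityTheory.cdf (ProbabilityTheory.gaussianReal 0 1) t := by
  rw [ProbabilityTheory.cdf_eq_real, Measure.real,
    ProbabilityTheory.gaussianReal_apply_eq_integral 0 one_ne_zero, ENNReal.toReal_ofReal]
  · unfold gaussianCDF
    exact integral_congr_ae (Filter.Eventually.of_forall fun x => gaussDens_eq_pdf x)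
  · exact integral_nonneg fun x => ProbabilityTheory.gaussianPDFReal_nonneg _ _ _

lemma gaussianCDF_sub (a b : ℝ) : gaussianCDF b - gaussianCDF a = ∫ x in a..b, gaussDens x :=
  intervalIntegral.integral_Iic_sub_Iic integrable_gaussDens.integrableOn
    integrable_gaussDens.integrableOn

lemma hasDerivAt_gaussianCDF (x : ℝ) : HasDerivAt gaussianCDF (gaussDens x) x := by
  have h : gaussianCDF = fun u => (∫ y in (0 : ℝ)..u, gaussDens y) + gaussianCDF 0 := by
    funext u; rw [← gaussianCDF_sub]; ring
  rw [h]
  exact (intervalIntegral.integral_hasDerivAt_right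
    integrable_gaussDens.intervalIntegrable
    (continuous_gaussDens.stronglyMeasurableAtFilter _ _) continuous_gaussDens.continuousAt).add_const _

lemma continuous_gaussianCDF : Continuous gaussianCDF :=
  continuous_iff_continuousAt.2 fun x => (hasDerivAt_gaussianCDF x).continuousAt

lemma gaussianCDF_strictMono : StrictMono gaussianCDF := by
  apply strictMono_of_deriv_pos
  intro x
  rw [(hasDerivAt_gaussianCDF x).deriv]
  exact gaussDens_pos x

lemma tendsto_gaussianCDF_atTop : Filter.Tendsto gaussianCDF Filter.atTop (nhds 1) := by
  rw [show gaussianCDF = _ from funext gaussianCDF_eq]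
  exact ProbabilityTheory.tendsto_cdf_atTop _

lemma tendsto_gaussianCDF_atBot : Filter.Tendsto gaussianCDF Filter.atBot (nhds 0) := by
  rw [show gaussianCDF = _ from funext gaussianCDF_eq]
  exact ProbabilityTheory.tendsto_cdf_atBot _

lemma gaussianCDF_lt_one (x : ℝ) : gaussianCDF x < 1 :=
  (gaussianCDF_strictMono (lt_add_one x)).trans_le
    (gaussianCDF_strictMono.monotone.ge_of_tendsto tendsto_gaussianCDF_atTop _)

lemma gaussianCDF_pos (x : ℝ) : 0 < gaussianCDF x :=
  (gaussianCDF_strictMono.monotone.le_of_tendsto tendsto_gaussianCDF_atBot _).trans_lt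
    (gaussianCDF_strictMono (sub_one_lt x))

lemma gaussianCDF_neg (x : ℝ) : gaussianCDF (-x) = 1 - gaussianCDF x := by
  -- `Φ(x) + Φ(-x)` has zero derivative and tends to `1` at infinity
  have hd : ∀ y, HasDerivAt (fun y => gaussianCDF y + gaussianCDF (-y)) 0 y := by
    intro y
    have h := (hasDerivAt_gaussianCDF y).add
      ((hasDerivAt_gaussianCDF (-y)).comp y (hasDerivAt_neg y))
    convert! h using 1
    rw [gaussDens_neg]; ring
  have hc : ∀ y, gaussianCDF y + gaussianCDF (-y) = gaussianCDF x + gaussianCDF (-x) := fun y =>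
    is_const_of_deriv_eq_zero (fun z => (hd z).differentiableAt) (fun z => (hd z).deriv) y x
  have ht : Filter.Tendsto (fun y => gaussianCDF y + gaussianCDF (-y)) Filter.atTop
      (nhds (1 + 0)) :=
    tendsto_gaussianCDF_atTop.add (tendsto_gaussianCDF_atBot.comp Filter.tendsto_neg_atTop_atBot)
  simp_rw [hc] at ht
  have := tendsto_nhds_unique ht tendsto_const_nhds
  linarith

lemma gaussianCDF_one_lt : gaussianCDF 1 < 9 / 10 := by
  have h0 := gaussianCDF_neg 0
  rw [neg_zero] at h0
  have h1 := gaussianCDF_sub 0 1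
  have h2 : ∫ x in (0 : ℝ)..1, gaussDens x < ∫ x in (0 : ℝ)..1, (2 / 5 : ℝ) := by
    refine intervalIntegral.integral_lt_integral_of_continuousOn_of_le_of_exists_lt (by norm_num)
      continuous_gaussDens.continuousOn continuousOn_const (fun x _ => gaussDens_le x)
      ⟨1, by simp, ?_⟩
    refine lt_of_lt_of_le ?_ (gaussDens_le 0)
    unfold gaussDens
    gcongr
    norm_num
  simp at h2
  linarith

/-- The quantile function `Φ⁻¹`; it is the inverse of `Φ` on `(0, 1)` and has no meaning
outside this interval. -/
def quant : ℝ → ℝ := Function.invFun gaussianCDF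

lemma quant_gaussianCDF (x : ℝ) : quant (gaussianCDF x) = x :=
  Function.leftInverse_invFun gaussianCDF_strictMono.injective x

lemma gaussianCDF_quant {p : ℝ} (hp : p ∈ Set.Ioo (0 : ℝ) 1) : gaussianCDF (quant p) = p := by
  apply Function.invFun_eq
  have h1 : ∃ a, gaussianCDF a < p :=
    (tendsto_gaussianCDF_atBot.eventually (gt_mem_nhds hp.1)).exists
  have h2 : ∃ b, p < gaussianCDF b :=
    (tendsto_gaussianCDF_atTop.eventually (lt_mem_nhds hp.2)).exists
  obtain ⟨a, ha⟩ := h1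
  obtain ⟨b, hb⟩ := h2
  exact mem_range_of_exists_le_of_exists_ge continuous_gaussianCDF ⟨a, ha.le⟩ ⟨b, hb.le⟩

lemma gaussianCDF_mem (x : ℝ) : gaussianCDF x ∈ Set.Ioo (0 : ℝ) 1 :=
  ⟨gaussianCDF_pos x, gaussianCDF_lt_one x⟩

lemma quant_strictMonoOn : StrictMonoOn quant (Set.Ioo 0 1) := by
  intro p hp q hq h
  rw [← gaussianCDF_strictMono.lt_iff_lt, gaussianCDF_quant hp, gaussianCDF_quant hq]
  exact h

lemma quant_one_sub {p : ℝ} (hp : p ∈ Set.Ioo (0 : ℝ) 1) : quant (1 - p) = -quant p := by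
  rw [← quant_gaussianCDF (-quant p), gaussianCDF_neg, gaussianCDF_quant hp]

lemma continuousAt_quant {p : ℝ} (hp : p ∈ Set.Ioo (0 : ℝ) 1) : ContinuousAt quant p := by
  refine quant_strictMonoOn.continuousAt_of_image_mem_nhds (isOpen_Ioo.mem_nhds hp) ?_
  have : quant '' Set.Ioo 0 1 = Set.univ := by
    rw [Set.eq_univ_iff_forall]
    exact fun x => ⟨gaussianCDF x, gaussianCDF_mem x, quant_gaussianCDF x⟩
  rw [this]
  exact Filter.univ_mem

lemma hasDerivAt_quant {p : ℝ} (hp : p ∈ Set.Ioo (0 : ℝ) 1) :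
    HasDerivAt quant (gaussDens (quant p))⁻¹ p :=
  HasDerivAt.of_local_left_inverse (continuousAt_quant hp) (hasDerivAt_gaussianCDF _)
    (gaussDens_pos _).ne' (Filter.eventually_of_mem (isOpen_Ioo.mem_nhds hp)
      fun _ hq => gaussianCDF_quant hq)

/-! ### The Gaussian isoperimetric profile and Bobkov's two-point inequality -/

/-- The Gaussian isoperimetric profile `I = φ ∘ Φ⁻¹`, meaningful on `(0, 1)`. -/
def isoProf (p : ℝ) : ℝ := gaussDens (quant p)

lemma isoProf_pos (p : ℝ) : 0 < isoProf p := gaussDens_pos _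

lemma isoProf_gaussianCDF (x : ℝ) : isoProf (gaussianCDF x) = gaussDens x := by
  rw [isoProf, quant_gaussianCDF]

lemma isoProf_one_sub {p : ℝ} (hp : p ∈ Set.Ioo (0 : ℝ) 1) : isoProf (1 - p) = isoProf p := by
  rw [isoProf, quant_one_sub hp, gaussDens_neg, isoProf]

lemma hasDerivAt_isoProf {p : ℝ} (hp : p ∈ Set.Ioo (0 : ℝ) 1) :
    HasDerivAt isoProf (-quant p) p := by
  have := (hasDerivAt_gaussDens (quant p)).comp p (hasDerivAt_quant hp)
  convert! this using 1
  field_simp [(gaussDens_pos (quant p)).ne']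

lemma hasDerivAt_isoProf_sq {p : ℝ} (hp : p ∈ Set.Ioo (0 : ℝ) 1) :
    HasDerivAt (fun p => isoProf p ^ 2) (-2 * (isoProf p * quant p)) p := by
  have := (hasDerivAt_isoProf hp).pow 2
  convert! this using 1
  push_cast; ring

lemma hasDerivAt_isoProf_mul_quant {p : ℝ} (hp : p ∈ Set.Ioo (0 : ℝ) 1) :
    HasDerivAt (fun p => isoProf p * quant p) (1 - quant p ^ 2) p := by
  have := (hasDerivAt_isoProf hp).mul (hasDerivAt_quant hp)
  convert! this using 1
  have := (gaussDens_pos (quant p)).ne'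
  unfold isoProf
  field_simp
  ring

lemma hasDerivAt_quant_sq {p : ℝ} (hp : p ∈ Set.Ioo (0 : ℝ) 1) :
    HasDerivAt (fun p => quant p ^ 2) (2 * (quant p / isoProf p)) p := by
  have := (hasDerivAt_quant hp).pow 2
  convert! this using 1
  rw [isoProf]; push_cast; ring

lemma quant_div_isoProf_mono : MonotoneOn (fun p => quant p / isoProf p) (Set.Ioo 0 1) := by
  have hd : ∀ p ∈ Set.Ioo (0 : ℝ) 1, HasDerivAt (fun p => quant p / isoProf p)
      ((1 + quant p ^ 2) / isoProf p ^ 2) p := by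
    intro p hp
    have := (hasDerivAt_quant hp).div (hasDerivAt_isoProf hp) (isoProf_pos p).ne'
    convert! this using 1
    have := (gaussDens_pos (quant p)).ne'
    unfold isoProf
    field_simp
    ring
  refine monotoneOn_of_hasDerivWithinAt_nonneg (convex_Ioo 0 1)
    (f' := fun p => (1 + quant p ^ 2) / isoProf p ^ 2)
    (fun p hp => (hd p hp).continuousAt.continuousWithinAt) ?_ ?_
  · rw [interior_Ioo]
    exact fun p hp => (hd p hp).hasDerivWithinAt
  · intro p _
    positivity

lemma le_of_hasDerivAt_nonneg {f f' : ℝ → ℝ} {x : ℝ} (hx : 0 ≤ x)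
    (hd : ∀ y ∈ Set.Icc 0 x, HasDerivAt f (f' y) y) (h : ∀ y ∈ Set.Icc 0 x, 0 ≤ f' y) :
    f 0 ≤ f x := by
  refine monotoneOn_of_hasDerivWithinAt_nonneg (convex_Icc 0 x) (f' := f')
    (fun y hy => (hd y hy).continuousAt.continuousWithinAt) (fun y hy => ?_) (fun y hy => ?_)
    (Set.left_mem_Icc.2 hx) (Set.right_mem_Icc.2 hx) hx
  · exact (hd y (interior_subset hy)).hasDerivWithinAt
  · exact h y (interior_subset hy)

lemma hasDerivAt_comp_const_add {f : ℝ → ℝ} {f' c y : ℝ} (h : HasDerivAt f f' (c + y)) :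
    HasDerivAt (fun y => f (c + y)) f' y := by
  simpa using HasDerivAt.comp_const_add c y h

lemma hasDerivAt_comp_const_sub {f : ℝ → ℝ} {f' c y : ℝ} (h : HasDerivAt f f' (c - y)) :
    HasDerivAt (fun y => f (c - y)) (-f') y := by
  simpa using HasDerivAt.comp_const_sub c y h

/-- Second-order lower bound for the symmetric difference of `I²`. It rests on
`(I²)'' = 2 (Φ⁻¹)² - 2` and on the convexity of `(Φ⁻¹)²`. -/
lemma isoProf_sq_symm_add {c x : ℝ} (hx : 0 ≤ x) (h1 : 0 < c - x) (h2 : c + x < 1) :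
    2 * x ^ 2 * quant c ^ 2 ≤
      isoProf (c + x) ^ 2 + isoProf (c - x) ^ 2 + 2 * x ^ 2 - 2 * isoProf c ^ 2 := by
  have hp : ∀ y ∈ Set.Icc 0 x, c + y ∈ Set.Ioo (0 : ℝ) 1 := fun y hy =>
    ⟨by linarith [hy.1], by linarith [hy.2]⟩
  have hm : ∀ y ∈ Set.Icc 0 x, c - y ∈ Set.Ioo (0 : ℝ) 1 := fun y hy =>
    ⟨by linarith [hy.2], by linarith [hy.1]⟩
  have hv : ∀ y ∈ Set.Icc 0 x, 2 * quant c ^ 2 ≤ quant (c + y) ^ 2 + quant (c - y) ^ 2 := by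
    intro y hy
    have := le_of_hasDerivAt_nonneg (f := fun y => quant (c + y) ^ 2 + quant (c - y) ^ 2)
      (f' := fun y => 2 * (quant (c + y) / isoProf (c + y)) +
        -(2 * (quant (c - y) / isoProf (c - y)))) hy.1 ?_ ?_
    · simp at this; linarith
    · intro z hz
      have hz' : z ∈ Set.Icc 0 x := ⟨hz.1, hz.2.trans hy.2⟩
      exact (hasDerivAt_comp_const_add (hasDerivAt_quant_sq (hp z hz'))).add
        (hasDerivAt_comp_const_sub (hasDerivAt_quant_sq (hm z hz')))
    · intro z hz
      have hz' : z ∈ Set.Icc 0 x := ⟨hz.1, hz.2.trans hy.2⟩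
      have := quant_div_isoProf_mono (hm z hz') (hp z hz') (by linarith [hz.1])
      simp only at this
      linarith
  have hu : ∀ y ∈ Set.Icc 0 x, 0 ≤ -2 * (isoProf (c + y) * quant (c + y)) +
      -(-2 * (isoProf (c - y) * quant (c - y))) + (4 - 4 * quant c ^ 2) * y := by
    intro y hy
    have := le_of_hasDerivAt_nonneg (f := fun y => -2 * (isoProf (c + y) * quant (c + y)) +
      -(-2 * (isoProf (c - y) * quant (c - y))) + (4 - 4 * quant c ^ 2) * y)
      (f' := fun y => -2 * (1 - quant (c + y) ^ 2) + -(-2 * -(1 - quant (c - y) ^ 2))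
        + (4 - 4 * quant c ^ 2)) hy.1 ?_ ?_
    · simpa using this
    · intro z hz
      have hz' : z ∈ Set.Icc 0 x := ⟨hz.1, hz.2.trans hy.2⟩
      exact (((hasDerivAt_comp_const_add (hasDerivAt_isoProf_mul_quant (hp z hz'))).const_mul
        (-2)).add ((hasDerivAt_comp_const_sub
          (hasDerivAt_isoProf_mul_quant (hm z hz'))).const_mul (-2)).neg).add
        (by simpa using (hasDerivAt_id z).const_mul (4 - 4 * quant c ^ 2))
    · intro z hz
      have hz' : z ∈ Set.Icc 0 x := ⟨hz.1, hz.2.trans hy.2⟩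
      linarith [hv z hz']
  have := le_of_hasDerivAt_nonneg (f := fun y => isoProf (c + y) ^ 2 + isoProf (c - y) ^ 2 +
      (2 - 2 * quant c ^ 2) * y ^ 2) (f' := fun y => -2 * (isoProf (c + y) * quant (c + y)) +
      -(-2 * (isoProf (c - y) * quant (c - y))) + (4 - 4 * quant c ^ 2) * y) hx ?_ hu
  · simp at this; linarith
  · intro z hz
    refine ((hasDerivAt_comp_const_add (hasDerivAt_isoProf_sq (hp z hz))).add
      (hasDerivAt_comp_const_sub (hasDerivAt_isoProf_sq (hm z hz)))).add ?_
    have := (hasDerivAt_pow 2 z).const_mul (2 - 2 * quant c ^ 2)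
    convert! this using 1
    push_cast; ring

/-- For `c ≤ 1/2` the function `y ↦ I²(c + y) - I²(c - y)` is nonnegative and concave on `y ≥ 0`,
so it lies below its tangent at `0`. -/
lemma isoProf_sq_symm_sub {c x : ℝ} (hx : 0 ≤ x) (h1 : 0 < c - x) (h2 : c + x < 1)
    (hc : c ≤ 1 / 2) :
    0 ≤ isoProf (c + x) ^ 2 - isoProf (c - x) ^ 2 ∧
      isoProf (c + x) ^ 2 - isoProf (c - x) ^ 2 ≤ -4 * (isoProf c * quant c) * x := by
  have hp : ∀ y ∈ Set.Icc 0 x, c + y ∈ Set.Ioo (0 : ℝ) 1 := fun y hy =>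
    ⟨by linarith [hy.1], by linarith [hy.2]⟩
  have hm : ∀ y ∈ Set.Icc 0 x, c - y ∈ Set.Ioo (0 : ℝ) 1 := fun y hy =>
    ⟨by linarith [hy.2], by linarith [hy.1]⟩
  have habs : ∀ y ∈ Set.Icc 0 x, |quant (c + y)| ≤ |quant (c - y)| := by
    intro y hy
    have e1 : quant (c - y) ≤ quant (c + y) :=
      quant_strictMonoOn.monotoneOn (hm y hy) (hp y hy) (by linarith [hy.1])
    have e2 : quant (c + y) ≤ quant (1 - (c - y)) :=
      quant_strictMonoOn.monotoneOn (hp y hy)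
        ⟨by linarith [(hm y hy).2], by linarith [(hm y hy).1]⟩ (by linarith)
    rw [quant_one_sub (hm y hy)] at e2
    rw [abs_of_nonpos (a := quant (c - y)) (by linarith)]
    exact abs_le.2 ⟨by linarith, e2⟩
  have hw : ∀ y ∈ Set.Icc 0 x, 0 ≤ -4 * (isoProf c * quant c) +
      2 * (isoProf (c + y) * quant (c + y)) + 2 * (isoProf (c - y) * quant (c - y)) := by
    intro y hy
    have := le_of_hasDerivAt_nonneg (f := fun y => -4 * (isoProf c * quant c) +
      2 * (isoProf (c + y) * quant (c + y)) + 2 * (isoProf (c - y) * quant (c - y)))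
      (f' := fun y => 2 * (1 - quant (c + y) ^ 2) + 2 * -(1 - quant (c - y) ^ 2)) hy.1 ?_ ?_
    · refine le_trans (le_of_eq ?_) this
      simp; ring
    · intro z hz
      have hz' : z ∈ Set.Icc 0 x := ⟨hz.1, hz.2.trans hy.2⟩
      exact (((hasDerivAt_comp_const_add (hasDerivAt_isoProf_mul_quant (hp z hz'))).const_mul
        2).const_add _).add ((hasDerivAt_comp_const_sub
          (hasDerivAt_isoProf_mul_quant (hm z hz'))).const_mul 2)
    · intro z hz
      have hz' : z ∈ Set.Icc 0 x := ⟨hz.1, hz.2.trans hy.2⟩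
      have := sq_le_sq.2 (habs z hz')
      linarith
  constructor
  · have : isoProf (c - x) ≤ isoProf (c + x) :=
      gaussDens_le_of_abs_le (habs x (Set.right_mem_Icc.2 hx))
    have h0 := (isoProf_pos (c - x)).le
    nlinarith
  · have := le_of_hasDerivAt_nonneg (f := fun y => -4 * (isoProf c * quant c) * y -
      isoProf (c + y) ^ 2 + isoProf (c - y) ^ 2)
      (f' := fun y => -4 * (isoProf c * quant c) - -2 * (isoProf (c + y) * quant (c + y)) +
        -(-2 * (isoProf (c - y) * quant (c - y)))) hx ?_ ?_
    · simp at this; linarith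
    · intro z hz
      refine ((?_ : HasDerivAt _ _ _).sub (hasDerivAt_comp_const_add
        (hasDerivAt_isoProf_sq (hp z hz)))).add
        (hasDerivAt_comp_const_sub (hasDerivAt_isoProf_sq (hm z hz)))
      have := (hasDerivAt_id z).const_mul (-4 * (isoProf c * quant c))
      rwa [mul_one] at this
    · intro z hz
      linarith [hw z hz]

/-- The two-point inequality for points `c ± x` with midpoint `c ≤ 1/2`. -/
lemma two_point_aux {c x : ℝ} (hx : 0 ≤ x) (h1 : 0 < c - x) (h2 : c + x < 1) (hc : c ≤ 1 / 2) :
    2 * isoProf c ≤ Real.sqrt (isoProf (c + x) ^ 2 + x ^ 2) +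
      Real.sqrt (isoProf (c - x) ^ 2 + x ^ 2) := by
  have ha := isoProf_sq_symm_add hx h1 h2
  obtain ⟨hb1, hb2⟩ := isoProf_sq_symm_sub hx h1 h2 hc
  set A := isoProf (c + x) ^ 2 + x ^ 2 with hA
  set B := isoProf (c - x) ^ 2 + x ^ 2 with hB
  set C := isoProf c with hC
  set q := quant c
  have hA0 : 0 ≤ A := by positivity
  have hB0 : 0 ≤ B := by positivity
  have hC0 : 0 < C := isoProf_pos c
  have hsA := Real.sq_sqrt hA0
  have hsB := Real.sq_sqrt hB0
  have nA := Real.sqrt_nonneg A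
  have nB := Real.sqrt_nonneg B
  have hd : (A - B) ^ 2 ≤ (-4 * (C * q) * x) ^ 2 :=
    pow_le_pow_left₀ (by linarith) (by linarith) 2
  have hkey : (A - B) ^ 2 ≤ 8 * C ^ 2 * (A + B - 2 * C ^ 2) := by
    have : 8 * C ^ 2 * (2 * x ^ 2 * q ^ 2) ≤ 8 * C ^ 2 * (A + B - 2 * C ^ 2) := by
      apply mul_le_mul_of_nonneg_left _ (by positivity)
      linarith
    nlinarith
  -- `hkey` is equivalent to `(4C² - A - B)² ≤ 4AB`.
  have hprod : 4 * C ^ 2 - A - B ≤ 2 * (Real.sqrt A * Real.sqrt B) := by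
    have hP : (Real.sqrt A * Real.sqrt B) ^ 2 = A * B := by rw [mul_pow, hsA, hsB]
    refine le_of_abs_le (abs_le_of_sq_le_sq ?_ (by positivity))
    nlinarith
  nlinarith

/-- Bobkov's two-point inequality, the one-dimensional core of Gaussian isoperimetry. -/
lemma two_point {a b : ℝ} (ha : a ∈ Set.Ioo (0 : ℝ) 1) (hb : b ∈ Set.Ioo (0 : ℝ) 1) :
    isoProf ((a + b) / 2) ≤ (Real.sqrt (isoProf a ^ 2 + ((a - b) / 2) ^ 2) +
      Real.sqrt (isoProf b ^ 2 + ((a - b) / 2) ^ 2)) / 2 := by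
  wlog hab : b ≤ a generalizing a b
  · have := this hb ha (le_of_not_ge hab)
    rw [add_comm b a] at this
    rw [show ((a - b) / 2) ^ 2 = ((b - a) / 2) ^ 2 by ring]
    linarith
  wlog hc : (a + b) / 2 ≤ 1 / 2 generalizing a b
  · have ha' : 1 - a ∈ Set.Ioo (0 : ℝ) 1 := ⟨by linarith [ha.2], by linarith [ha.1]⟩
    have hb' : 1 - b ∈ Set.Ioo (0 : ℝ) 1 := ⟨by linarith [hb.2], by linarith [hb.1]⟩
    have := this hb' ha' (by linarith) (by linarith)
    rw [isoProf_one_sub ha, isoProf_one_sub hb,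
      show (1 - b + (1 - a)) / 2 = 1 - (a + b) / 2 by ring,
      isoProf_one_sub ⟨by linarith [ha.1, hb.1], by linarith [ha.2, hb.2]⟩,
      show (1 - b - (1 - a)) / 2 = (a - b) / 2 by ring] at this
    linarith
  have := two_point_aux (c := (a + b) / 2) (x := (a - b) / 2) (by linarith)
    (by linarith [hb.1]) (by linarith [ha.2]) hc
  rw [show (a + b) / 2 + (a - b) / 2 = a by ring, show (a + b) / 2 - (a - b) / 2 = b by ring]
    at this
  linarith

/-! ### Bobkov's inequality on the discrete cube -/

/-- The average of `f` over the discrete cube `{true, false}^m`. -/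
def cubeAvg (m : ℕ) (f : (Fin m → Bool) → ℝ) : ℝ := (∑ x, f x) / 2 ^ m

/-- Half the increment of `f` along the `i`-th coordinate of the cube. -/
def cubeDiff {m : ℕ} (f : (Fin m → Bool) → ℝ) (i : Fin m) (x : Fin m → Bool) : ℝ :=
  (f (Function.update x i true) - f (Function.update x i false)) / 2

lemma cubeAvg_succ (m : ℕ) (f : (Fin (m + 1) → Bool) → ℝ) :
    cubeAvg (m + 1) f = (cubeAvg m (fun x => f (Fin.cons true x)) +
      cubeAvg m (fun x => f (Fin.cons false x))) / 2 := by
  unfold cubeAvg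
  have : ∑ x, f x = ∑ p : Bool × (Fin m → Bool), f (Fin.cons p.1 p.2) :=
    (Fintype.sum_equiv (Fin.consEquiv fun _ => Bool) _ _ fun p => rfl).symm
  rw [this, Fintype.sum_prod_type]
  simp
  field_simp
  ring

lemma cubeAvg_mono {m : ℕ} {f g : (Fin m → Bool) → ℝ} (h : ∀ x, f x ≤ g x) :
    cubeAvg m f ≤ cubeAvg m g := by
  unfold cubeAvg
  gcongr with x
  exact h x

lemma cubeAvg_const (m : ℕ) (c : ℝ) : cubeAvg m (fun _ => c) = c := by
  simp [cubeAvg]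

lemma cubeAvg_add {m : ℕ} (f g : (Fin m → Bool) → ℝ) :
    cubeAvg m (fun x => f x + g x) = cubeAvg m f + cubeAvg m g := by
  simp [cubeAvg, Finset.sum_add_distrib, add_div]

lemma cubeAvg_const_mul {m : ℕ} (c : ℝ) (f : (Fin m → Bool) → ℝ) :
    cubeAvg m (fun x => c * f x) = c * cubeAvg m f := by
  simp [cubeAvg, ← Finset.mul_sum, mul_div_assoc]

lemma cubeAvg_mem {m : ℕ} {f : (Fin m → Bool) → ℝ} (h : ∀ x, f x ∈ Set.Ioo (0 : ℝ) 1) :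
    cubeAvg m f ∈ Set.Ioo (0 : ℝ) 1 := by
  unfold cubeAvg
  constructor
  · have : 0 < ∑ x, f x := Finset.sum_pos (fun x _ => (h x).1) Finset.univ_nonempty
    positivity
  · rw [div_lt_one (by positivity)]
    have : ∑ x, f x < ∑ _x : Fin m → Bool, (1 : ℝ) :=
      Finset.sum_lt_sum_of_nonempty Finset.univ_nonempty fun x _ => (h x).2
    simpa using this

/-- The triangle inequality for averages of the planar vectors `(g x, u x)`. -/
lemma sqrt_cubeAvg_le {m : ℕ} (g u : (Fin m → Bool) → ℝ) :
    Real.sqrt (cubeAvg m g ^ 2 + cubeAvg m u ^ 2) ≤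
      cubeAvg m fun x => Real.sqrt (g x ^ 2 + u x ^ 2) := by
  have h := norm_sum_le Finset.univ (fun x => (⟨g x, u x⟩ : ℂ))
  simp only [Complex.norm_eq_sqrt_sq_add_sq, Complex.re_sum, Complex.im_sum] at h
  unfold cubeAvg
  have hp : (0 : ℝ) < 2 ^ m := by positivity
  rw [le_div_iff₀ hp]
  refine le_trans (le_of_eq ?_) h
  rw [← Real.sqrt_sq hp.le, ← Real.sqrt_mul (by positivity), Real.sqrt_sq hp.le]
  congr 1
  field_simp

/-- Bobkov's inequality on the cube: the two-point inequality tensorizes, by the triangle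
inequality `sqrt_cubeAvg_le`. -/
lemma bobkov_cube : ∀ (m : ℕ) (f : (Fin m → Bool) → ℝ), (∀ x, f x ∈ Set.Ioo (0 : ℝ) 1) →
    isoProf (cubeAvg m f) ≤
      cubeAvg m fun x => Real.sqrt (isoProf (f x) ^ 2 + ∑ i, cubeDiff f i x ^ 2) := by
  intro m
  induction m with
  | zero =>
    intro f _
    simp [cubeAvg, Real.sqrt_sq (isoProf_pos _).le]
  | succ m ih =>
    intro f hf
    have hstep : ∀ b : Bool, Real.sqrt (isoProf (cubeAvg m fun x => f (Fin.cons b x)) ^ 2 +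
        ((cubeAvg m (fun x => f (Fin.cons true x)) -
          cubeAvg m (fun x => f (Fin.cons false x))) / 2) ^ 2) ≤
        cubeAvg m fun x => Real.sqrt (isoProf (f (Fin.cons b x)) ^ 2 +
          ∑ i, cubeDiff f i (Fin.cons b x) ^ 2) := by
      intro b
      have h1 := ih (fun x => f (Fin.cons b x)) fun x => hf _
      have h2 : (cubeAvg m (fun x => f (Fin.cons true x)) -
          cubeAvg m (fun x => f (Fin.cons false x))) / 2 =
          cubeAvg m fun x => (f (Fin.cons true x) - f (Fin.cons false x)) / 2 := by
        simp only [cubeAvg, ← Finset.sum_div, Finset.sum_sub_distrib]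
        ring
      rw [h2]
      refine (Real.sqrt_le_sqrt (add_le_add_left
        (pow_le_pow_left₀ (isoProf_pos _).le h1 2) _)).trans ?_
      refine (sqrt_cubeAvg_le _ _).trans (le_of_eq ?_)
      congr 1
      funext x
      rw [Real.sq_sqrt (by positivity), Fin.sum_univ_succ]
      congr 1
      simp only [cubeDiff, Fin.update_cons_zero, ← Fin.cons_update]
      ring
    rw [cubeAvg_succ, cubeAvg_succ]
    have := two_point (cubeAvg_mem fun x => hf (Fin.cons true x))
      (cubeAvg_mem fun x => hf (Fin.cons false x))
    refine this.trans ?_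
    have h1 := hstep true
    have h0 := hstep false
    linarith

/-! ### Bobkov's inequality for random walks -/

lemma gaussDens_lipschitz (a b : ℝ) : |gaussDens b - gaussDens a| ≤ |b - a| := by
  have h := Convex.norm_image_sub_le_of_norm_hasDerivWithin_le (f := gaussDens)
    (f' := fun x => -x * gaussDens x) (s := Set.univ) (C := 1) (x := a) (y := b)
    (fun x _ => (hasDerivAt_gaussDens x).hasDerivWithinAt) ?_ convex_univ trivial trivial
  · simpa using h
  · intro x _
    rw [Real.norm_eq_abs, abs_mul, abs_neg, abs_of_pos (gaussDens_pos x), gaussDens]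
    have h1 : |x| ≤ Real.exp (x ^ 2 / 2) := by
      have := Real.add_one_le_exp (x ^ 2 / 2)
      nlinarith [sq_abs x, sq_nonneg (|x| - 1)]
    have h2 : (1 : ℝ) ≤ Real.sqrt (2 * π) := by
      apply Real.le_sqrt_of_sq_le
      nlinarith [Real.pi_gt_d2]
    rw [← mul_div_assoc, div_le_one (by positivity)]
    refine le_trans ?_ h2
    rw [show -x ^ 2 / 2 = -(x ^ 2 / 2) by ring, Real.exp_neg]
    exact mul_inv_le_one_of_le₀ h1 (by positivity)

lemma gaussianCDF_taylor (a b : ℝ) :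
    |gaussianCDF b - gaussianCDF a - gaussDens a * (b - a)| ≤ (b - a) ^ 2 := by
  have h := Convex.norm_image_sub_le_of_norm_hasDerivWithin_le
    (f := fun x => gaussianCDF x - gaussDens a * x)
    (f' := fun x => gaussDens x - gaussDens a) (s := Set.uIcc a b) (C := |b - a|) (x := a) (y := b)
    (fun x _ => ?_) ?_ (convex_uIcc a b) Set.left_mem_uIcc Set.right_mem_uIcc
  · rw [Real.norm_eq_abs, Real.norm_eq_abs, abs_mul_abs_self] at h
    refine le_trans (le_of_eq ?_) (h.trans (le_of_eq (by ring)))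
    congr 1; ring
  · have := (hasDerivAt_id x).const_mul (gaussDens a)
    rw [mul_one] at this
    exact ((hasDerivAt_gaussianCDF x).sub this).hasDerivWithinAt
  · intro x hx
    exact (gaussDens_lipschitz a x).trans (Set.abs_sub_left_of_mem_uIcc hx)

/-- The endpoint of the walk with steps `± v k`, the signs being given by `x`. -/
def walk {E : Type*} [AddCommGroup E] {m : ℕ} (v : Fin m → E) (x : Fin m → Bool) : E :=
  ∑ k, if x k then v k else -v k

lemma walk_update {E : Type*} [AddCommGroup E] {m : ℕ} (v : Fin m → E) (x : Fin m → Bool)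
    (k : Fin m) (b : Bool) :
    walk v (Function.update x k b) =
      walk v x + ((if b then v k else -v k) - if x k then v k else -v k) := by
  unfold walk
  rw [← Finset.add_sum_erase _ _ (Finset.mem_univ k),
    ← Finset.add_sum_erase (a := k) _ (fun k => if x k then v k else -v k) (Finset.mem_univ k)]
  have : ∑ j ∈ Finset.univ.erase k, (if Function.update x k b j then v j else -v j) =
      ∑ j ∈ Finset.univ.erase k, if x j then v j else -v j := by
    refine Finset.sum_congr rfl fun j hj => ?_
    rw [Function.update_of_ne (Finset.ne_of_mem_erase hj)]
  rw [this, Function.update_self]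
  abel

lemma sqrt_add_sum_sq_le {ι : Type*} [Fintype ι] (I : ℝ) (a e : ι → ℝ) :
    Real.sqrt (I ^ 2 + ∑ k, (a k + e k) ^ 2) ≤
      Real.sqrt (I ^ 2 + ∑ k, a k ^ 2) + Real.sqrt (∑ k, e k ^ 2) := by
  have hA : 0 ≤ ∑ k, a k ^ 2 := Finset.sum_nonneg fun _ _ => sq_nonneg _
  have hE : 0 ≤ ∑ k, e k ^ 2 := Finset.sum_nonneg fun _ _ => sq_nonneg _
  have hcs := Finset.sum_mul_sq_le_sq_mul_sq Finset.univ a e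
  have hexp : ∑ k, (a k + e k) ^ 2 = ∑ k, a k ^ 2 + 2 * ∑ k, a k * e k + ∑ k, e k ^ 2 := by
    rw [Finset.mul_sum, ← Finset.sum_add_distrib, ← Finset.sum_add_distrib]
    exact Finset.sum_congr rfl fun k _ => by ring
  have hX := Real.sq_sqrt (show 0 ≤ I ^ 2 + ∑ k, a k ^ 2 by positivity)
  have hY := Real.sq_sqrt hE
  set X := Real.sqrt (I ^ 2 + ∑ k, a k ^ 2)
  set Y := Real.sqrt (∑ k, e k ^ 2)
  have hX0 : 0 ≤ X := Real.sqrt_nonneg _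
  have hY0 : 0 ≤ Y := Real.sqrt_nonneg _
  have hle : ∑ k, a k * e k ≤ X * Y := by
    refine le_of_abs_le (abs_le_of_sq_le_sq ?_ (by positivity))
    rw [mul_pow, hX, hY]
    nlinarith [sq_nonneg I]
  refine Real.sqrt_le_iff.2 ⟨by positivity, ?_⟩
  nlinarith

/-- `h` is `L`-Lipschitz with gradient `w`, with a uniform second-order Taylor bound. -/
structure GradBound {E : Type*} [NormedAddCommGroup E] [InnerProductSpace ℝ E]
    (h : E → ℝ) (w : E → E) (L C : ℝ) : Prop where
  nonneg : 0 ≤ C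
  norm_le : ∀ x, ‖w x‖ ≤ L
  lip : ∀ x y, |h (x + y) - h x| ≤ L * ‖y‖
  taylor : ∀ x y, |h (x + y) - h x - ⟪w x, y⟫| ≤ C * ‖y‖ ^ 2

lemma GradBound.gaussianCDF_taylor {E : Type*} [NormedAddCommGroup E] [InnerProductSpace ℝ E]
    {h : E → ℝ} {w : E → E} {L C : ℝ} (H : GradBound h w L C) (x y : E) :
    |gaussianCDF (h (x + y)) - gaussianCDF (h x) - gaussDens (h x) * ⟪w x, y⟫| ≤
      (L ^ 2 + C) * ‖y‖ ^ 2 := by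
  have h1 := _root_.gaussianCDF_taylor (h x) (h (x + y))
  have h2 := H.taylor x y
  have h3 := sq_le_sq.2 ((H.lip x y).trans (le_abs_self _))
  have h4 : |gaussDens (h x) * (h (x + y) - h x - ⟪w x, y⟫)| ≤ C * ‖y‖ ^ 2 := by
    rw [abs_mul, abs_of_pos (gaussDens_pos _)]
    have := gaussDens_le (h x)
    calc gaussDens (h x) * |h (x + y) - h x - ⟪w x, y⟫| ≤ 1 * (C * ‖y‖ ^ 2) := by
          gcongr
          linarith
      _ = _ := one_mul _
  have := abs_add_le (gaussianCDF (h (x + y)) - gaussianCDF (h x) -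
    gaussDens (h x) * (h (x + y) - h x)) (gaussDens (h x) * (h (x + y) - h x - ⟪w x, y⟫))
  rw [show gaussianCDF (h (x + y)) - gaussianCDF (h x) -
    gaussDens (h x) * (h (x + y) - h x) + gaussDens (h x) * (h (x + y) - h x - ⟪w x, y⟫) =
    gaussianCDF (h (x + y)) - gaussianCDF (h x) - gaussDens (h x) * ⟪w x, y⟫ by ring] at this
  nlinarith

/-- Bobkov's inequality for `Φ ∘ h` along a random walk whose steps satisfy the Bessel inequality;
the last term is the error made when replacing finite differences by derivatives. -/
lemma bobkov_walk {E : Type*} [NormedAddCommGroup E] [InnerProductSpace ℝ E]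
    {h : E → ℝ} {w : E → E} {L C : ℝ} (H : GradBound h w L C) {m : ℕ} (v : Fin m → E)
    (hv : ∀ a : E, ∑ k, ⟪a, v k⟫ ^ 2 ≤ ‖a‖ ^ 2) :
    isoProf (cubeAvg m fun x => gaussianCDF (h (walk v x))) ≤
      Real.sqrt (1 + L ^ 2) * (cubeAvg m fun x => gaussDens (h (walk v x))) +
        4 * (L ^ 2 + C) * Real.sqrt (∑ k, ‖v k‖ ^ 4) := by
  refine (bobkov_cube m _ fun x => gaussianCDF_mem _).trans ?_
  rw [← cubeAvg_const_mul, ← cubeAvg_const m (4 * (L ^ 2 + C) * Real.sqrt (∑ k, ‖v k‖ ^ 4)),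
    ← cubeAvg_add]
  refine cubeAvg_mono fun x => ?_
  have hC := H.nonneg
  set y := walk v x with hy
  set g := gaussDens (h y) with hg
  have hg0 : 0 < g := gaussDens_pos _
  set e : Fin m → ℝ := fun k => cubeDiff (fun x => gaussianCDF (h (walk v x))) k x -
    g * ⟪w y, v k⟫ with he
  have hek : ∀ k, |e k| ≤ 4 * (L ^ 2 + C) * ‖v k‖ ^ 2 := by
    intro k
    set z1 : E := v k - if x k then v k else -v k with hz1
    set z0 : E := -v k - if x k then v k else -v k with hz0
    have hn : ∀ z : E, ‖z‖ ≤ 2 * ‖v k‖ →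
        |gaussianCDF (h (y + z)) - gaussianCDF (h y) - g * ⟪w y, z⟫| ≤
          4 * (L ^ 2 + C) * ‖v k‖ ^ 2 := by
      intro z hz
      refine (H.gaussianCDF_taylor y z).trans ?_
      calc (L ^ 2 + C) * ‖z‖ ^ 2 ≤ (L ^ 2 + C) * (2 * ‖v k‖) ^ 2 := by gcongr
        _ = _ := by ring
    have hv2 : ‖v k + v k‖ ≤ 2 * ‖v k‖ := by
      rw [two_mul]; exact norm_add_le _ _
    have n1 : ‖z1‖ ≤ 2 * ‖v k‖ := by
      rw [hz1]; split_ifs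
      · simp
      · rwa [sub_neg_eq_add]
    have n0 : ‖z0‖ ≤ 2 * ‖v k‖ := by
      rw [hz0]; split_ifs
      · rwa [← neg_add', norm_neg]
      · simp
    have hin : ⟪w y, z1⟫ - ⟪w y, z0⟫ = 2 * ⟪w y, v k⟫ := by
      rw [← inner_sub_right, hz1, hz0, sub_sub_sub_cancel_right, sub_neg_eq_add, inner_add_right]
      ring
    have e1 := hn z1 n1
    have e0 := hn z0 n0
    have hd : e k = ((gaussianCDF (h (y + z1)) - gaussianCDF (h y) - g * ⟪w y, z1⟫) -
        (gaussianCDF (h (y + z0)) - gaussianCDF (h y) - g * ⟪w y, z0⟫)) / 2 := by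
      simp only [he, cubeDiff, walk_update, if_true, Bool.false_eq_true, if_false]
      rw [← hy, ← hz1, ← hz0]
      linear_combination (g / 2) * hin
    rw [hd, abs_le]
    rw [abs_le] at e1 e0
    constructor <;> linarith [e1.1, e1.2, e0.1, e0.2]
  have hsum : ∑ k, cubeDiff (fun x => gaussianCDF (h (walk v x))) k x ^ 2 =
      ∑ k, (g * ⟪w y, v k⟫ + e k) ^ 2 := by
    refine Finset.sum_congr rfl fun k _ => ?_
    simp [he]
  rw [hsum, isoProf_gaussianCDF]
  refine (sqrt_add_sum_sq_le _ _ _).trans (add_le_add ?_ ?_)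
  · rw [← hg, mul_comm, ← Real.sqrt_sq hg0.le, ← Real.sqrt_mul (by positivity),
      Real.sqrt_sq hg0.le]
    apply Real.sqrt_le_sqrt
    have h1 := hv (w y)
    have h2 : ‖w y‖ ^ 2 ≤ L ^ 2 := pow_le_pow_left₀ (norm_nonneg _) (H.norm_le y) 2
    simp only [mul_pow, ← Finset.mul_sum]
    nlinarith [sq_nonneg g]
  · rw [← Real.sqrt_sq (show 0 ≤ 4 * (L ^ 2 + C) by positivity), ← Real.sqrt_mul (by positivity),
      Finset.mul_sum]
    apply Real.sqrt_le_sqrt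
    refine Finset.sum_le_sum fun k _ => ?_
    have := sq_le_sq.2 ((hek k).trans (le_abs_self _))
    refine this.trans (le_of_eq (by ring))

/-! ### Convergence of random walks to the Gaussian measure -/

/-- The measure given by the Gaussian density agrees with Mathlib's standard Gaussian. -/
lemma stdGaussian_eq (n : ℕ) :
    stdGaussian n = ProbabilityTheory.stdGaussian (EuclideanSpace ℝ (Fin n)) := by
  have hc : (0 : ℝ) < (2 * π) ^ (-(n : ℝ) / 2) := by positivity
  have hnn : ∀ x : EuclideanSpace ℝ (Fin n),
      0 ≤ (2 * π) ^ (-(n : ℝ) / 2) * Real.exp (-‖x‖ ^ 2 / 2) := fun x => by positivity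
  have hmeas : Measurable fun x : EuclideanSpace ℝ (Fin n) =>
      ENNReal.ofReal ((2 * π) ^ (-(n : ℝ) / 2) * Real.exp (-‖x‖ ^ 2 / 2)) := by fun_prop
  have hexp : ∫ x : EuclideanSpace ℝ (Fin n), Real.exp (-(1 / 2) * ‖x‖ ^ 2) =
      (2 * π) ^ ((n : ℝ) / 2) := by
    rw [GaussianFourier.integral_rexp_neg_mul_sq_norm (by norm_num)]
    simp [mul_comm]
  have hexpi : Integrable fun x : EuclideanSpace ℝ (Fin n) => Real.exp (-(1 / 2) * ‖x‖ ^ 2) := by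
    by_contra hni
    rw [integral_undef hni] at hexp
    have : (0 : ℝ) < (2 * π) ^ ((n : ℝ) / 2) := by positivity
    linarith
  have hexpi' : Integrable fun x : EuclideanSpace ℝ (Fin n) =>
      (2 * π) ^ (-(n : ℝ) / 2) * Real.exp (-‖x‖ ^ 2 / 2) := by
    refine (hexpi.const_mul ((2 * π) ^ (-(n : ℝ) / 2))).congr
      (Filter.Eventually.of_forall fun x => ?_)
    simp only
    congr 2; ring
  have : IsFiniteMeasure (stdGaussian n) := by
    unfold stdGaussian
    exact isFiniteMeasure_withDensity_ofReal hexpi'.2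
  apply Measure.ext_of_charFun
  funext t
  rw [ProbabilityTheory.charFun_stdGaussian, charFun_apply]
  unfold stdGaussian
  rw [integral_withDensity_eq_integral_toReal_smul hmeas
    (Filter.Eventually.of_forall fun x => ENNReal.ofReal_lt_top)]
  have h := GaussianFourier.integral_cexp_neg_mul_sq_norm_add (b := 1 / 2)
    (V := EuclideanSpace ℝ (Fin n)) (by norm_num) Complex.I t
  have h2 : ∀ x : EuclideanSpace ℝ (Fin n),
      (ENNReal.ofReal ((2 * π) ^ (-(n : ℝ) / 2) * Real.exp (-‖x‖ ^ 2 / 2))).toReal •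
        Complex.exp (((⟪x, t⟫ : ℝ) : ℂ) * Complex.I) =
      (((2 * π) ^ (-(n : ℝ) / 2) : ℝ) : ℂ) *
        Complex.exp (-(1 / 2) * ‖x‖ ^ 2 + Complex.I * (⟪t, x⟫ : ℝ)) := by
    intro x
    rw [ENNReal.toReal_ofReal (hnn x), Complex.real_smul, Complex.exp_add, real_inner_comm]
    push_cast
    rw [mul_assoc]
    congr 3
    · ring
    · ring
  simp_rw [h2]
  rw [integral_const_mul, h, ← mul_assoc]
  have h3 : (((2 * π) ^ (-(n : ℝ) / 2) : ℝ) : ℂ) * ((π : ℂ) / (1 / 2)) ^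
      ((Module.finrank ℝ (EuclideanSpace ℝ (Fin n)) : ℂ) / 2) = 1 := by
    have : ((π : ℂ) / (1 / 2)) ^
      ((Module.finrank ℝ (EuclideanSpace ℝ (Fin n)) : ℂ) / 2) =
        (((2 * π) ^ ((n : ℝ) / 2) : ℝ) : ℂ) := by
      rw [Complex.ofReal_cpow (by positivity)]
      simp [mul_comm]
    rw [this, ← Complex.ofReal_mul, ← Real.rpow_add (by positivity)]
    simp [neg_div]
  rw [h3, one_mul]
  congr 1
  simp
  ring

instance stdGaussian_isProb (n : ℕ) : IsProbabilityMeasure (stdGaussian n) := by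
  rw [stdGaussian_eq]; infer_instance

/-- The law of the endpoint of the walk with independent uniform signs. -/
def walkLaw {E : Type*} [AddCommGroup E] [MeasurableSpace E] {m : ℕ} (v : Fin m → E) : Measure E :=
  ((PMF.uniformOfFintype (Fin m → Bool)).toMeasure).map (walk v)

instance walkLaw_isProb {E : Type*} [AddCommGroup E] [MeasurableSpace E] {m : ℕ}
    (v : Fin m → E) : IsProbabilityMeasure (walkLaw v) :=
  Measure.isProbabilityMeasure_map (measurable_of_finite _).aemeasurable

lemma integral_walkLaw {E F : Type*} [NormedAddCommGroup E] [MeasurableSpace E] [BorelSpace E]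
    [NormedAddCommGroup F] [NormedSpace ℝ F] [CompleteSpace F]
    [SecondCountableTopology F] {m : ℕ} (v : Fin m → E) {f : E → F} (hf : Continuous f) :
    ∫ y, f y ∂(walkLaw v) = ((2 : ℝ) ^ m)⁻¹ • ∑ x, f (walk v x) := by
  let _ : MeasurableSpace F := borel F
  have _ : BorelSpace F := ⟨rfl⟩
  unfold walkLaw
  rw [integral_map (measurable_of_finite _).aemeasurable
    hf.measurable.stronglyMeasurable.aestronglyMeasurable, PMF.integral_eq_sum, Finset.smul_sum]
  refine Finset.sum_congr rfl fun x _ => ?_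
  simp

lemma integral_walkLaw_real {E : Type*} [NormedAddCommGroup E] [MeasurableSpace E] [BorelSpace E]
    {m : ℕ} (v : Fin m → E) {f : E → ℝ} (hf : Continuous f) :
    ∫ y, f y ∂(walkLaw v) = cubeAvg m fun x => f (walk v x) := by
  rw [integral_walkLaw v hf, cubeAvg, smul_eq_mul, div_eq_inv_mul]

lemma charFun_walkLaw {E : Type*} [NormedAddCommGroup E] [InnerProductSpace ℝ E]
    [MeasurableSpace E] [BorelSpace E] {m : ℕ} (v : Fin m → E) (t : E) :
    charFun (walkLaw v) t = ∏ k, ((Real.cos ⟪v k, t⟫ : ℝ) : ℂ) := by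
  rw [charFun_apply, integral_walkLaw v (by fun_prop)]
  have h1 : ∀ k, ((Real.cos ⟪v k, t⟫ : ℝ) : ℂ) = 2⁻¹ * ∑ b : Bool,
      Complex.exp (((⟪if b then v k else -v k, t⟫ : ℝ) : ℂ) * Complex.I) := by
    intro k
    rw [Fintype.sum_bool, Complex.ofReal_cos, Complex.cos]
    simp [inner_neg_left]
    ring
  simp_rw [h1]
  rw [Finset.prod_mul_distrib, Finset.prod_univ_sum]
  simp only [Finset.prod_const, Finset.card_univ, Fintype.card_fin, Fintype.piFinset_univ]
  rw [Complex.real_smul]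
  congr 1
  · push_cast; simp
  · refine Finset.sum_congr rfl fun x _ => ?_
    rw [← Complex.exp_sum]
    congr 1
    rw [walk, sum_inner]
    push_cast
    rw [Finset.sum_mul]

lemma tendsto_cos_pow (t : ℝ) :
    Filter.Tendsto (fun N : ℕ => ((Real.cos ((Real.sqrt N)⁻¹ * t) : ℝ) : ℂ) ^ N) Filter.atTop
      (nhds (Complex.exp (-(t : ℂ) ^ 2 / 2))) := by
  have h0 : ∫ y, y ∂(walkLaw fun _ : Fin 1 => (1 : ℝ)) = 0 := by
    rw [integral_walkLaw_real _ (f := fun y : ℝ => y) continuous_id, cubeAvg_succ]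
    simp [cubeAvg, walk]
  have h1 : ∫ y, y ^ 2 ∂(walkLaw fun _ : Fin 1 => (1 : ℝ)) = 1 := by
    rw [integral_walkLaw_real _ (by fun_prop), cubeAvg_succ]
    simp [cubeAvg, walk]
  have h := ProbabilityTheory.tendsto_charFun_inv_sqrt_mul_pow
    (P := walkLaw fun _ : Fin 1 => (1 : ℝ)) (X := id) aemeasurable_id h0 h1 t
  rw [Measure.map_id] at h
  simp_rw [charFun_walkLaw] at h
  simpa using h

/-- The steps of the approximating walk: `N` copies of each vector `eᵢ / √N` of the rescaled
standard basis. -/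
def stepVec (n N : ℕ) (k : Fin (n * N)) : EuclideanSpace ℝ (Fin n) :=
  (Real.sqrt N)⁻¹ • EuclideanSpace.single (finProdFinEquiv.symm k).1 (1 : ℝ)

/-- `walkLaw (stepVec n N)` as a bundled probability measure. -/
def walkPM (n N : ℕ) : ProbabilityMeasure (EuclideanSpace ℝ (Fin n)) :=
  ⟨walkLaw (stepVec n N), inferInstance⟩

/-- `stdGaussian n` as a bundled probability measure. -/
def gaussPM (n : ℕ) : ProbabilityMeasure (EuclideanSpace ℝ (Fin n)) :=
  ⟨stdGaussian n, inferInstance⟩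

/-- The central limit theorem for the walks with steps `stepVec`. -/
lemma tendsto_walkLaw (n : ℕ) {f : EuclideanSpace ℝ (Fin n) → ℝ} (hf : Continuous f)
    {B : ℝ} (hB : ∀ x, |f x| ≤ B) :
    Filter.Tendsto (fun N => cubeAvg (n * N) fun x => f (walk (stepVec n N) x)) Filter.atTop
      (nhds (∫ x, f x ∂(stdGaussian n))) := by
  have hconv : Filter.Tendsto (fun N => walkPM n N) Filter.atTop
      (nhds (gaussPM n)) := by
    apply ProbabilityMeasure.tendsto_of_tendsto_charFun
    intro t
    have hlim : Filter.Tendsto (fun N : ℕ => ∏ i : Fin n,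
        ((Real.cos ((Real.sqrt N)⁻¹ * t i) : ℝ) : ℂ) ^ N) Filter.atTop
        (nhds (∏ i : Fin n, Complex.exp (-(t i : ℂ) ^ 2 / 2))) :=
      tendsto_finsetProd _ fun i _ => tendsto_cos_pow (t i)
    have hr : charFun (stdGaussian n) t = ∏ i : Fin n, Complex.exp (-(t i : ℂ) ^ 2 / 2) := by
      rw [stdGaussian_eq, ProbabilityTheory.charFun_stdGaussian, ← Complex.exp_sum,
        ← Complex.ofReal_pow, EuclideanSpace.norm_sq_eq]
      congr 1
      push_cast
      rw [← Finset.sum_div, Finset.sum_neg_distrib]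
      simp [← Complex.ofReal_pow]
    have hl : ∀ N : ℕ, charFun (walkLaw (stepVec n N)) t =
        ∏ i : Fin n, ((Real.cos ((Real.sqrt N)⁻¹ * t i) : ℝ) : ℂ) ^ N := by
      intro N
      rw [charFun_walkLaw]
      rw [← Fintype.prod_equiv finProdFinEquiv (fun p : Fin n × Fin N =>
        ((Real.cos ((Real.sqrt N)⁻¹ * t p.1) : ℝ) : ℂ)) _ ?_]
      · rw [Fintype.prod_prod_type]
        simp
      · intro p
        simp [stepVec, inner_smul_left, EuclideanSpace.inner_single_left]
    simp only [walkPM, gaussPM, ProbabilityMeasure.coe_mk]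
    simp_rw [hl]
    rw [hr]
    exact hlim
  rw [ProbabilityMeasure.tendsto_iff_forall_integral_tendsto] at hconv
  have := hconv (BoundedContinuousFunction.ofNormedAddCommGroup f hf B hB)
  simp only [BoundedContinuousFunction.coe_ofNormedAddCommGroup, walkPM, gaussPM,
    ProbabilityMeasure.coe_mk] at this
  simp_rw [integral_walkLaw_real _ hf] at this
  exact this

lemma stepVec_sum_sq (n : ℕ) {N : ℕ} (hN : 0 < N) (a : EuclideanSpace ℝ (Fin n)) :
    ∑ k, ⟪a, stepVec n N k⟫ ^ 2 = ‖a‖ ^ 2 := by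
  rw [← Fintype.sum_equiv finProdFinEquiv (fun p : Fin n × Fin N =>
        ((Real.sqrt N)⁻¹ * a p.1) ^ 2) _ ?_]
  · have : (0 : ℝ) < N := by exact_mod_cast hN
    rw [Fintype.sum_prod_type, EuclideanSpace.norm_sq_eq]
    refine Finset.sum_congr rfl fun i _ => ?_
    simp [mul_pow]
    field_simp
  · intro p
    simp [stepVec, inner_smul_right, EuclideanSpace.inner_single_right]

lemma stepVec_sum_norm (n : ℕ) {N : ℕ} (hN : 0 < N) :
    ∑ k, ‖stepVec n N k‖ ^ 4 = n / N := by
  have h0 : (0 : ℝ) < N := by exact_mod_cast hN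
  have : ∀ k, ‖stepVec n N k‖ ^ 4 = ((N : ℝ) ^ 2)⁻¹ := by
    intro k
    simp only [stepVec, norm_smul, EuclideanSpace.single, PiLp.norm_single, norm_one, mul_one, norm_inv,
      Real.norm_eq_abs, inv_pow, abs_of_nonneg (Real.sqrt_nonneg _)]
    rw [show (4 : ℕ) = 2 * 2 from rfl, pow_mul, Real.sq_sqrt h0.le]
  simp [this]
  field_simp

lemma integral_gaussianCDF_mem {Ω : Type*} [MeasurableSpace Ω] (μ : Measure Ω)
    [IsProbabilityMeasure μ] {h : Ω → ℝ} (hh : Measurable h) :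
    ∫ x, gaussianCDF (h x) ∂μ ∈ Set.Ioo (0 : ℝ) 1 := by
  have hm : Measurable fun x => gaussianCDF (h x) := continuous_gaussianCDF.measurable.comp hh
  have hi : Integrable (fun x => gaussianCDF (h x)) μ := by
    refine Integrable.of_bound hm.aestronglyMeasurable 1 (Filter.Eventually.of_forall fun x => ?_)
    rw [Real.norm_eq_abs, abs_of_pos (gaussianCDF_pos _)]
    exact (gaussianCDF_lt_one _).le
  have hi2 : Integrable (fun x => 1 - gaussianCDF (h x)) μ := (integrable_const _).sub hi
  constructor
  · rw [integral_pos_iff_support_of_nonneg (fun x => (gaussianCDF_pos _).le) hi]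
    rw [show Function.support (fun x => gaussianCDF (h x)) = Set.univ from
      Set.eq_univ_of_forall fun x => (gaussianCDF_pos _).ne']
    simp
  · have : 0 < ∫ x, (1 - gaussianCDF (h x)) ∂μ := by
      rw [integral_pos_iff_support_of_nonneg
        (fun x => sub_nonneg.2 (gaussianCDF_lt_one _).le) hi2]
      rw [show Function.support (fun x => 1 - gaussianCDF (h x)) = Set.univ from
        Set.eq_univ_of_forall fun x => (sub_pos.2 (gaussianCDF_lt_one _)).ne']
      simp
    rw [integral_sub (integrable_const _) hi] at this
    simp at this
    exact this

/-- The functional form of Gaussian isoperimetry, for functions `Φ ∘ h` with `|∇h| ≤ L`. -/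
lemma bobkov_gaussian {n : ℕ} {h : EuclideanSpace ℝ (Fin n) → ℝ}
    {w : EuclideanSpace ℝ (Fin n) → EuclideanSpace ℝ (Fin n)} {L C : ℝ} (H : GradBound h w L C)
    (hc : Continuous h) :
    isoProf (∫ x, gaussianCDF (h x) ∂(stdGaussian n)) ≤
      Real.sqrt (1 + L ^ 2) * ∫ x, gaussDens (h x) ∂(stdGaussian n) := by
  have t1 := tendsto_walkLaw n (continuous_gaussianCDF.comp hc) (B := 1) fun x => by
    rw [Function.comp, abs_of_pos (gaussianCDF_pos _)]; exact (gaussianCDF_lt_one _).le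
  have t2 := tendsto_walkLaw n (continuous_gaussDens.comp hc) (B := 2 / 5) fun x => by
    rw [Function.comp, abs_of_pos (gaussDens_pos _)]; exact gaussDens_le _
  have t3 := (hasDerivAt_isoProf (integral_gaussianCDF_mem (stdGaussian n)
    hc.measurable)).continuousAt.tendsto.comp t1
  have t4 : Filter.Tendsto (fun N : ℕ => 4 * (L ^ 2 + C) * Real.sqrt ((n : ℝ) / N)) Filter.atTop
      (nhds 0) := by
    have := ((tendsto_const_div_atTop_nhds_zero_nat (n : ℝ)).sqrt).const_mul (4 * (L ^ 2 + C))
    simpa using this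
  have t5 := (t2.const_mul (Real.sqrt (1 + L ^ 2))).add t4
  rw [add_zero] at t5
  refine le_of_tendsto_of_tendsto t3 t5 ?_
  filter_upwards [Filter.eventually_gt_atTop 0] with N hN
  have := bobkov_walk H (stepVec n N) fun a => (stepVec_sum_sq n hN a).le
  rw [stepVec_sum_norm n hN] at this
  exact this

/-! ### Growth of smoothed measures of sublevel sets -/

lemma GradBound.const_sub {E : Type*} [NormedAddCommGroup E] [InnerProductSpace ℝ E]
    {D : E → ℝ} {w : E → E} {C : ℝ} (H : GradBound D w 1 C) {l : ℝ} (hl : 0 < l) (c : ℝ) :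
    GradBound (fun x => l * (c - D x)) (fun x => -(l • w x)) l (l * C) where
  nonneg := mul_nonneg hl.le H.nonneg
  norm_le x := by
    rw [norm_neg, norm_smul, Real.norm_eq_abs, abs_of_pos hl]
    nlinarith [H.norm_le x]
  lip x y := by
    have h := H.lip x y
    rw [show l * (c - D (x + y)) - l * (c - D x) = -(l * (D (x + y) - D x)) by ring, abs_neg,
      abs_mul, abs_of_pos hl]
    nlinarith
  taylor x y := by
    have h := H.taylor x y
    rw [inner_neg_left, real_inner_smul_left,
      show l * (c - D (x + y)) - l * (c - D x) - -(l * ⟪w x, y⟫) =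
        -(l * (D (x + y) - D x - ⟪w x, y⟫)) by ring, abs_neg,
      abs_mul, abs_of_pos hl, mul_assoc]
    exact mul_le_mul_of_nonneg_left h hl.le

lemma integrable_gaussianCDF_comp {Ω : Type*} [MeasurableSpace Ω] (μ : Measure Ω)
    [IsProbabilityMeasure μ] {h : Ω → ℝ} (hh : Measurable h) :
    Integrable (fun x => gaussianCDF (h x)) μ := by
  refine Integrable.of_bound (continuous_gaussianCDF.measurable.comp hh).aestronglyMeasurable 1
    (Filter.Eventually.of_forall fun x => ?_)
  rw [Real.norm_eq_abs, abs_of_pos (gaussianCDF_pos _)]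
  exact (gaussianCDF_lt_one _).le

lemma hasDerivAt_integral_gaussianCDF {Ω : Type*} [MeasurableSpace Ω] (μ : Measure Ω)
    [IsProbabilityMeasure μ] {D : Ω → ℝ} (hD : Measurable D) {l : ℝ} (hl : 0 < l) (c : ℝ) :
    HasDerivAt (fun c => ∫ x, gaussianCDF (l * (c - D x)) ∂μ)
      (l * ∫ x, gaussDens (l * (c - D x)) ∂μ) c := by
  rw [← integral_const_mul]
  have hm : ∀ c, Measurable fun x => l * (c - D x) := fun c => by fun_prop
  refine (hasDerivAt_integral_of_dominated_loc_of_deriv_le (s := Set.univ)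
    (F := fun c x => gaussianCDF (l * (c - D x)))
    (F' := fun c x => l * gaussDens (l * (c - D x))) (bound := fun _ => l * (2 / 5))
    Filter.univ_mem (Filter.Eventually.of_forall fun c =>
      (integrable_gaussianCDF_comp μ (hm c)).aestronglyMeasurable)
    (integrable_gaussianCDF_comp μ (hm c)) ?_ ?_ (integrable_const _) ?_).2
  · exact ((continuous_gaussDens.measurable.comp (hm c)).const_mul l).aestronglyMeasurable
  · refine Filter.Eventually.of_forall fun x c _ => ?_
    rw [Real.norm_eq_abs, abs_of_pos (mul_pos hl (gaussDens_pos _))]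
    exact mul_le_mul_of_nonneg_left (gaussDens_le _) hl.le
  · refine Filter.Eventually.of_forall fun x c _ => ?_
    have h1 : HasDerivAt (fun c => l * (c - D x)) l c := by
      simpa using ((hasDerivAt_id c).sub_const (D x)).const_mul l
    have := (hasDerivAt_gaussianCDF (l * (c - D x))).comp c h1
    rw [mul_comm] at this
    exact this

/-- With `M(c) = ∫ Φ(l (c - D))`, the functional inequality `bobkov_gaussian` says that
`Φ⁻¹ ∘ M` has derivative at least `l / √(1 + l²) ≥ l / (1 + l)`. -/
lemma quant_growth {n : ℕ} {D : EuclideanSpace ℝ (Fin n) → ℝ}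
    {w : EuclideanSpace ℝ (Fin n) → EuclideanSpace ℝ (Fin n)} {C : ℝ} (H : GradBound D w 1 C)
    (hD : Continuous D) {l : ℝ} (hl : 0 < l) (c : ℝ) {s : ℝ} (hs : 0 ≤ s) :
    gaussianCDF (quant (∫ x, gaussianCDF (l * (c - D x)) ∂(stdGaussian n)) + s * (l / (1 + l))) ≤
      ∫ x, gaussianCDF (l * (c + s - D x)) ∂(stdGaussian n) := by
  set M : ℝ → ℝ := fun c => ∫ x, gaussianCDF (l * (c - D x)) ∂(stdGaussian n) with hM
  have hMmem : ∀ c, M c ∈ Set.Ioo (0 : ℝ) 1 := fun c =>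
    integral_gaussianCDF_mem (stdGaussian n)
      (h := fun x => l * (c - D x)) (by have := hD.measurable; fun_prop)
  have key := le_of_hasDerivAt_nonneg (f := fun y => quant (M (c + y)) - y * (l / (1 + l)))
    (f' := fun y => (isoProf (M (c + y)))⁻¹ *
      (l * ∫ x, gaussDens (l * (c + y - D x)) ∂(stdGaussian n)) - l / (1 + l)) hs ?_ ?_
  · have h1 : quant (M c) + s * (l / (1 + l)) ≤ quant (M (c + s)) := by
      simp only [add_zero, zero_mul, sub_zero] at key
      linarith
    calc gaussianCDF (quant (M c) + s * (l / (1 + l))) ≤ gaussianCDF (quant (M (c + s))) :=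
          gaussianCDF_strictMono.monotone h1
      _ = M (c + s) := gaussianCDF_quant (hMmem _)
  · intro y _
    have h1 := hasDerivAt_integral_gaussianCDF (stdGaussian n) hD.measurable hl (c + y)
    have h2 := (hasDerivAt_quant (hMmem (c + y))).comp (c + y) h1
    have h3 : HasDerivAt (fun y => y * (l / (1 + l))) (l / (1 + l)) y := by
      simpa using (hasDerivAt_id y).mul_const (l / (1 + l))
    exact (hasDerivAt_comp_const_add h2).sub h3
  · intro y _
    have hb := bobkov_gaussian (H.const_sub hl (c + y)) (by fun_prop)
    have hI := isoProf_pos (M (c + y))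
    have hs1 : Real.sqrt (1 + l ^ 2) ≤ 1 + l :=
      Real.sqrt_le_iff.2 ⟨by positivity, by nlinarith⟩
    have hJ : 0 ≤ ∫ x, gaussDens (l * (c + y - D x)) ∂(stdGaussian n) :=
      integral_nonneg fun x => (gaussDens_pos _).le
    have hb2 : isoProf (M (c + y)) ≤
        (1 + l) * ∫ x, gaussDens (l * (c + y - D x)) ∂(stdGaussian n) :=
      hb.trans (mul_le_mul_of_nonneg_right hs1 hJ)
    rw [sub_nonneg, inv_mul_eq_div, div_le_div_iff₀ (by positivity) hI]
    nlinarith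

/-! ### The distance to a convex set -/

/-- The function `D = √(d² + δ²)`, with `d` the distance to a closed convex set `A`, is
`1`-Lipschitz and satisfies the Taylor bound of `GradBound`. The reason is that `d²` has gradient
`2 (x - P x)`, with `P` the projection to `A`, and a second-order remainder in `[0, ‖y‖²]`. -/
lemma exists_smooth_dist {n : ℕ} {A : Set (EuclideanSpace ℝ (Fin n))} (hA : Convex ℝ A)
    (hcl : IsClosed A) (hne : A.Nonempty) {δ : ℝ} (hδ : 0 < δ) :
    ∃ (D : EuclideanSpace ℝ (Fin n) → ℝ) (w : EuclideanSpace ℝ (Fin n) → EuclideanSpace ℝ (Fin n)),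
      GradBound D w 1 (1 / (2 * δ)) ∧ Continuous D ∧ (∀ x ∈ A, D x = δ) ∧
        ∀ x, ∃ k ∈ A, ‖x - k‖ ≤ D x := by
  have hP : ∀ x, ∃ v ∈ A, ∀ a ∈ A, ⟪x - v, a - v⟫ ≤ 0 := by
    intro x
    obtain ⟨v, hv, hv2⟩ := exists_norm_eq_iInf_of_complete_convex hne hcl.isComplete hA x
    exact ⟨v, hv, (norm_eq_iInf_iff_real_inner_le_zero hA hv).1 hv2⟩
  choose P hPm hPi using hP
  have hmin : ∀ x, ∀ a ∈ A, ‖x - P x‖ ^ 2 ≤ ‖x - a‖ ^ 2 := by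
    intro x a ha
    have h1 := norm_sub_sq_real (x - P x) (a - P x)
    rw [sub_sub_sub_cancel_right] at h1
    nlinarith [hPi x a ha, sq_nonneg ‖a - P x‖]
  have hup : ∀ x y, ‖x + y - P (x + y)‖ ^ 2 ≤ ‖x - P x‖ ^ 2 + 2 * ⟪x - P x, y⟫ + ‖y‖ ^ 2 := by
    intro x y
    rw [← norm_add_sq_real, sub_add_eq_add_sub]
    exact hmin _ _ (hPm x)
  have hlo : ∀ x y, ‖x - P x‖ ^ 2 + 2 * ⟪x - P x, y⟫ ≤ ‖x + y - P (x + y)‖ ^ 2 := by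
    intro x y
    have h1 := hPi x _ (hPm (x + y))
    have h2 := norm_add_sq_real (x - P x) (y - (P (x + y) - P x))
    rw [inner_sub_right, show x - P x + (y - (P (x + y) - P x)) = x + y - P (x + y) by abel] at h2
    nlinarith [sq_nonneg ‖y - (P (x + y) - P x)‖]
  set D : EuclideanSpace ℝ (Fin n) → ℝ := fun x => Real.sqrt (‖x - P x‖ ^ 2 + δ ^ 2) with hD
  have hDsq : ∀ x, D x ^ 2 = ‖x - P x‖ ^ 2 + δ ^ 2 := fun x => Real.sq_sqrt (by positivity)
  have hDδ : ∀ x, δ ≤ D x := fun x => Real.le_sqrt_of_sq_le (by nlinarith [sq_nonneg ‖x - P x‖])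
  have hDn : ∀ x, ‖x - P x‖ ≤ D x := fun x => Real.le_sqrt_of_sq_le (by nlinarith)
  have hDpos : ∀ x, 0 < D x := fun x => hδ.trans_le (hDδ x)
  have hlip1 : ∀ x y, D (x + y) ≤ D x + ‖y‖ := by
    intro x y
    refine abs_le_of_sq_le_sq' ?_ (by have := hDpos x; positivity) |>.2
    rw [hDsq]
    have h1 := hup x y
    have h2 := real_inner_le_norm (x - P x) y
    have h3 := mul_le_mul_of_nonneg_right (hDn x) (norm_nonneg y)
    nlinarith [hDsq x]
  have hlip : ∀ x y, |D (x + y) - D x| ≤ ‖y‖ := by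
    intro x y
    rw [abs_le]
    have h1 := hlip1 x y
    have h2 := hlip1 (x + y) (-y)
    rw [add_neg_cancel_right, norm_neg] at h2
    constructor <;> linarith
  refine ⟨D, fun x => (D x)⁻¹ • (x - P x), ⟨by positivity, ?_, ?_, ?_⟩, ?_, ?_, ?_⟩
  · intro x
    rw [norm_smul, norm_inv, Real.norm_eq_abs, abs_of_pos (hDpos x), inv_mul_le_one₀ (hDpos x)]
    exact hDn x
  · simpa using hlip
  · intro x y
    have h1 := hup x y
    have h2 := hlo x y
    have h3 : (D (x + y) - D x) ^ 2 ≤ ‖y‖ ^ 2 := sq_le_sq.2 ((hlip x y).trans (le_abs_self _))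
    have h4 := hDpos x
    have h5 : D (x + y) - D x - ⟪(D x)⁻¹ • (x - P x), y⟫ =
        (D (x + y) ^ 2 - D x ^ 2 - 2 * ⟪x - P x, y⟫ - (D (x + y) - D x) ^ 2) / (2 * D x) := by
      rw [real_inner_smul_left]
      field_simp
      ring
    rw [h5, abs_div, abs_of_pos (by positivity : 0 < 2 * D x), one_div_mul_eq_div]
    have h6 : |D (x + y) ^ 2 - D x ^ 2 - 2 * ⟪x - P x, y⟫ - (D (x + y) - D x) ^ 2| ≤ ‖y‖ ^ 2 := by
      rw [abs_le]
      constructor <;> nlinarith [hDsq x, hDsq (x + y), sq_nonneg (D (x + y) - D x)]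
    exact div_le_div₀ (by positivity) h6 (by positivity) (by linarith [hDδ x])
  · refine LipschitzWith.continuous (K := 1) (LipschitzWith.of_dist_le_mul fun x y => ?_)
    have := hlip y (x - y)
    rw [add_sub_cancel] at this
    simpa [Real.dist_eq, dist_eq_norm] using this
  · intro x hx
    have h1 := hmin x x hx
    have h2 : ‖x - P x‖ ^ 2 = 0 := le_antisymm (by simpa using h1) (by positivity)
    simp only [hD, h2, zero_add]
    exact Real.sqrt_sq hδ.le
  · exact fun x => ⟨P x, hPm x, hDn x⟩

/-! ### Enlargements and dilations of convex sets -/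

/-- Gaussian isoperimetry for closed convex sets, up to an arbitrarily small loss `s' - s`. -/
lemma enlargement {n : ℕ} {A : Set (EuclideanSpace ℝ (Fin n))} (hA : Convex ℝ A)
    (hcl : IsClosed A) (hne : A.Nonempty) {r s s' : ℝ} (hs : 0 ≤ s) (hss : s < s')
    (hr : gaussianCDF r < (stdGaussian n).real A) :
    gaussianCDF (r + s) ≤ (stdGaussian n).real {x | ∃ k ∈ A, ‖x - k‖ ≤ s'} := by
  set δ : ℝ := (s' - s) / 3 with hδdef
  have hδ : 0 < δ := by rw [hδdef]; linarith
  obtain ⟨D, w, H, hDc, hDA, hDk⟩ := exists_smooth_dist hA hcl hne hδ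
  have hms : MeasurableSet {x | D x ≤ s'} := (isClosed_le hDc continuous_const).measurableSet
  have hsub : (stdGaussian n).real {x | D x ≤ s'} ≤
      (stdGaussian n).real {x | ∃ k ∈ A, ‖x - k‖ ≤ s'} :=
    measureReal_mono fun x hx => by
      obtain ⟨k, hk, hk2⟩ := hDk x
      exact ⟨k, hk, hk2.trans hx⟩
  refine le_trans ?_ hsub
  have hmeas : ∀ l c : ℝ, Measurable fun x => l * (c - D x) := fun l c => by
    have := hDc.measurable
    fun_prop
  have hlow : ∀ l : ℝ, 0 < l → (stdGaussian n).real A * gaussianCDF (l * δ) ≤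
      ∫ x, gaussianCDF (l * (2 * δ - D x)) ∂(stdGaussian n) := by
    intro l hl
    have h1 : ∫ x, A.indicator (fun _ => gaussianCDF (l * δ)) x ∂(stdGaussian n) =
        (stdGaussian n).real A * gaussianCDF (l * δ) := by
      rw [integral_indicator_const _ hcl.measurableSet, smul_eq_mul]
    rw [← h1]
    refine integral_mono ((integrable_const _).indicator hcl.measurableSet)
      (integrable_gaussianCDF_comp _ (hmeas _ _)) fun x => ?_
    by_cases hx : x ∈ A
    · simp only [Set.indicator_of_mem hx, hDA x hx]
      rw [show 2 * δ - δ = δ by ring]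
    · simp only [Set.indicator_of_notMem hx]
      exact (gaussianCDF_pos _).le
  have hupp : ∀ l : ℝ, 0 < l → ∫ x, gaussianCDF (l * (2 * δ + s - D x)) ∂(stdGaussian n) ≤
      (stdGaussian n).real {x | D x ≤ s'} + gaussianCDF (-(l * δ)) := by
    intro l hl
    have h1 : ∫ x, ({x | D x ≤ s'}.indicator (fun _ => (1 : ℝ)) x + gaussianCDF (-(l * δ)))
        ∂(stdGaussian n) = (stdGaussian n).real {x | D x ≤ s'} + gaussianCDF (-(l * δ)) := by
      rw [integral_add ((integrable_const _).indicator hms) (integrable_const _),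
        integral_indicator_const _ hms]
      simp
    rw [← h1]
    refine integral_mono (integrable_gaussianCDF_comp _ (hmeas _ _))
      (((integrable_const _).indicator hms).add (integrable_const _)) fun x => ?_
    by_cases hx : x ∈ {x | D x ≤ s'}
    · simp only [Set.indicator_of_mem hx]
      linarith [gaussianCDF_lt_one (l * (2 * δ + s - D x)), gaussianCDF_pos (-(l * δ))]
    · simp only [Set.indicator_of_notMem hx, zero_add]
      apply gaussianCDF_strictMono.monotone
      have hx' : s' < D x := not_le.1 hx
      nlinarith
  have hlδ : Filter.Tendsto (fun l : ℝ => l * δ) Filter.atTop Filter.atTop :=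
    Filter.tendsto_id.atTop_mul_const hδ
  have t1 : Filter.Tendsto (fun l : ℝ => (stdGaussian n).real A * gaussianCDF (l * δ))
      Filter.atTop (nhds ((stdGaussian n).real A)) := by
    simpa using (tendsto_gaussianCDF_atTop.comp hlδ).const_mul ((stdGaussian n).real A)
  have t2 : Filter.Tendsto (fun l : ℝ => (stdGaussian n).real {x | D x ≤ s'} +
      gaussianCDF (-(l * δ))) Filter.atTop (nhds ((stdGaussian n).real {x | D x ≤ s'})) := by
    simpa using (tendsto_gaussianCDF_atBot.comp
      (Filter.tendsto_neg_atTop_atBot.comp hlδ)).const_add ((stdGaussian n).real {x | D x ≤ s'})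
  have t3 : Filter.Tendsto (fun l : ℝ => gaussianCDF (r + s * (1 - (1 + l)⁻¹))) Filter.atTop
      (nhds (gaussianCDF (r + s))) := by
    have h1 : Filter.Tendsto (fun l : ℝ => (1 + l)⁻¹) Filter.atTop (nhds 0) :=
      tendsto_inv_atTop_zero.comp (Filter.tendsto_atTop_add_const_left _ 1 Filter.tendsto_id)
    have h2 : Filter.Tendsto (fun l : ℝ => r + s * (1 - (1 + l)⁻¹)) Filter.atTop
        (nhds (r + s)) := by
      simpa using ((h1.const_sub 1).const_mul s).const_add r
    exact (continuous_gaussianCDF.tendsto _).comp h2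
  refine le_of_tendsto_of_tendsto t3 t2 ?_
  filter_upwards [Filter.eventually_gt_atTop 0, t1.eventually_const_lt hr] with l hl hlr
  have h1 : r ≤ quant (∫ x, gaussianCDF (l * (2 * δ - D x)) ∂(stdGaussian n)) := by
    rw [← quant_gaussianCDF r]
    exact quant_strictMonoOn.monotoneOn (gaussianCDF_mem r)
      (integral_gaussianCDF_mem _ (hmeas _ _)) (hlr.le.trans (hlow l hl))
  refine le_trans (gaussianCDF_strictMono.monotone ?_)
    ((quant_growth H hDc hl (2 * δ) hs).trans (hupp l hl))
  have h2 : (1 : ℝ) - (1 + l)⁻¹ = l / (1 + l) := by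
    have : (1 : ℝ) + l ≠ 0 := by positivity
    field_simp
    ring
  rw [h2]
  linarith

lemma halfspace_measure {n : ℕ} {f : StrongDual ℝ (EuclideanSpace ℝ (Fin n))} (hf : f ≠ 0)
    (r : ℝ) : (stdGaussian n).real {a | f a ≤ ‖f‖ * r} = gaussianCDF r := by
  have hf0 : 0 < ‖f‖ := norm_pos_iff.2 hf
  have hmap : (stdGaussian n).map (‖f‖⁻¹ • f : StrongDual ℝ (EuclideanSpace ℝ (Fin n))) =
      ProbabilityTheory.gaussianReal 0 1 := by
    rw [stdGaussian_eq, ProbabilityTheory.IsGaussian.map_eq_gaussianReal,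
      ProbabilityTheory.integral_strongDual_stdGaussian,
      ProbabilityTheory.variance_dual_stdGaussian, norm_smul, norm_inv, norm_norm,
      inv_mul_cancel₀ hf0.ne']
    simp
  rw [gaussianCDF_eq, ProbabilityTheory.cdf_eq_real, ← hmap,
    map_measureReal_apply (by fun_prop) measurableSet_Iic]
  congr 1
  ext a
  simp [inv_mul_le_iff₀ hf0]

/-- A convex set contains, in its interior, the ball of radius `r` centered at the origin, as soon
as its measure exceeds that of a half-space at distance `r` from the origin. -/
lemma ball_subset_interior {n : ℕ} {K : Set (EuclideanSpace ℝ (Fin n))} (hK : Convex ℝ K)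
    {r : ℝ} (hr : gaussianCDF r < (stdGaussian n).real (interior K))
    {x : EuclideanSpace ℝ (Fin n)} (hx : ‖x‖ ≤ r) : x ∈ interior K := by
  by_contra hxK
  obtain ⟨f, hf⟩ := geometric_hahn_banach_open_point hK.interior isOpen_interior hxK
  have hf0 : f ≠ 0 := by
    rintro rfl
    have : interior K = ∅ := Set.eq_empty_of_forall_notMem fun a ha => by simpa using hf a ha
    rw [this, measureReal_empty] at hr
    linarith [gaussianCDF_pos r]
  have h1 : (stdGaussian n).real (interior K) ≤ gaussianCDF r := by
    rw [← halfspace_measure hf0 r]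
    refine measureReal_mono fun a ha => ?_
    calc f a ≤ f x := (hf a ha).le
      _ ≤ ‖f x‖ := le_abs_self _
      _ ≤ ‖f‖ * ‖x‖ := f.le_opNorm x
      _ ≤ ‖f‖ * r := mul_le_mul_of_nonneg_left hx (norm_nonneg _)
  linarith

lemma stdGaussian_frontier {n : ℕ} {K : Set (EuclideanSpace ℝ (Fin n))} (hK : Convex ℝ K) :
    stdGaussian n (frontier K) = 0 :=
  withDensity_absolutelyContinuous _ _ (hK.addHaar_frontier volume)

/-! ### The dilation inequality -/

/-- If `K` is convex with `γₙ(K) ≥ 9/10`, then `γₙ(tK) ≥ Φ(t)` for all `t ≥ 1`. -/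
theorem gaussian_measure_dilation (n : ℕ) (hn : 1 ≤ n)
    (K : Set (EuclideanSpace ℝ (Fin n))) (hK : Convex ℝ K)
    (hmeas : (9 / 10 : ℝ≥0∞) ≤ stdGaussian n K) (t : ℝ) (ht : 1 ≤ t) :
    ENNReal.ofReal (gaussianCDF t) ≤ stdGaussian n (t • K) := by
  have h9 : (9 / 10 : ℝ) ≤ (stdGaussian n).real K := by
    have h := ENNReal.toReal_mono (measure_ne_top _ _) hmeas
    simpa [measureReal_def] using h
  rw [← ENNReal.ofReal_toReal (measure_ne_top (stdGaussian n) (t • K))]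
  refine ENNReal.ofReal_le_ofReal ?_
  rw [← measureReal_def]
  rcases ht.eq_or_lt with rfl | ht1
  · rw [one_smul]
    exact gaussianCDF_one_lt.le.trans h9
  have hKi : (stdGaussian n).real (interior K) = (stdGaussian n).real K := by
    refine le_antisymm (measureReal_mono interior_subset) ?_
    have h1 : K ⊆ interior K ∪ frontier K := by
      rw [← closure_eq_interior_union_frontier]
      exact subset_closure
    refine (measureReal_mono h1).trans ((measureReal_union_le _ _).trans ?_)
    simp [measureReal_def, stdGaussian_frontier hK]
  have hKc : (9 / 10 : ℝ) ≤ (stdGaussian n).real (closure K) :=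
    h9.trans (measureReal_mono subset_closure)
  -- A radius slightly larger than `1` leaves room for the loss in `enlargement`.
  obtain ⟨r, hr1, hr2⟩ : ∃ r : ℝ, 1 < r ∧ gaussianCDF r < 9 / 10 := by
    have h1 : ∀ᶠ r in nhdsWithin (1 : ℝ) (Set.Ioi 1), gaussianCDF r < 9 / 10 :=
      (continuous_gaussianCDF.continuousAt.eventually_lt_const gaussianCDF_one_lt).filter_mono
        nhdsWithin_le_nhds
    obtain ⟨r, h2, h3⟩ := (h1.and self_mem_nhdsWithin).exists
    exact ⟨r, h3, h2⟩
  have hball : ∀ x : EuclideanSpace ℝ (Fin n), ‖x‖ ≤ r → x ∈ interior K := fun x hx =>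
    ball_subset_interior hK (hr2.trans_le (by rw [hKi]; exact h9)) hx
  have hne : (closure K).Nonempty :=
    ⟨0, subset_closure (interior_subset (hball 0 (by rw [norm_zero]; linarith)))⟩
  have hts : t - 1 < (t - 1) * r := by nlinarith
  have henl := enlargement hK.closure isClosed_closure hne (sub_nonneg.2 ht) hts
    (hr2.trans_le hKc)
  refine (gaussianCDF_strictMono.monotone (by linarith : t ≤ r + (t - 1))).trans (henl.trans ?_)
  refine measureReal_mono ?_
  rintro x ⟨k, hk, hxk⟩
  have ht0 : 0 < t := by linarith
  have ht2 : 0 < t - 1 := by linarith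
  -- `x / t` is a convex combination of `k` and a point of the ball of radius `r`.
  have hy : (t - 1)⁻¹ • (x - k) ∈ interior K := by
    apply hball
    rw [norm_smul, norm_inv, Real.norm_eq_abs, abs_of_pos ht2, inv_mul_le_iff₀ ht2]
    exact hxk
  have hz := hK.combo_closure_interior_mem_interior hk hy (a := t⁻¹) (b := (t - 1) / t)
    (by positivity) (by positivity) (by field_simp; ring)
  refine Set.mem_smul_set.2 ⟨_, interior_subset hz, ?_⟩
  rw [smul_add, smul_smul, smul_smul, smul_smul]
  have e1 : t * t⁻¹ = 1 := by field_simp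
  have e2 : t * ((t - 1) / t) * (t - 1)⁻¹ = 1 := by field_simp
  rw [e1, e2, one_smul, one_smul, add_sub_cancel]

end
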